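/- arXiv:1606.02267 — 3 statements merged into one kernel-verified Lean document; each statement's English description precedes it below -/
import Mathlib

section
/- (Toy diophantine remark of Section 4) Let A, B ∈ ℝ² with dist(A,B) = 1 and let ℓ = [A,B] be the segment joining them. Let M be a positive integer and let P₁, P₂, P₃ ∈ ℚ² ⊆ ℝ² be points each of whose two coordinates is a rational number with denominator at most M. Suppose each P_i lies within distance ε of the segment ℓ, where 0 < ε < (1/10)·M^{-6}. Then P₁, P₂, P₃ are collinear. -/
/-- The point of the Euclidean plane with the given coordinate functions. -/
noncomputable def toE2 (f : Fin 2 → ℝ) : EuclideanSpace ℝ (Fin 2) :=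
  (WithLp.equiv 2 (Fin 2 → ℝ)).symm f

/-!
Let `D` be twice the signed area of the triangle `P₁P₂P₃`. It is the determinant of the matrix with
rows `(xᵢ, yᵢ, 1)`, so its product with the six coordinate denominators is an integer, and `D ≠ 0`
forces `|D| ≥ M⁻⁶`. On the other hand each edge `Pⱼ - Pᵢ` is `s (B - A) + e` with `|s| ≤ 1` and
`‖e‖ ≤ 2ε`; since the area form kills `(B - A, B - A)`, this gives `|D| ≤ 4ε (dist A B + ε)`,
which is smaller than `M⁻⁶`.
-/

open Module

section AreaForm

variable {E : Type*} [NormedAddCommGroup E] [InnerProductSpace ℝ E] [Fact (finrank ℝ E = 2)]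
  (o : Orientation ℝ E (Fin 2))

lemma exists_eq_smul_of_areaForm_eq_zero {x y : E} (hx : x ≠ 0) (h : o.areaForm x y = 0) :
    ∃ r : ℝ, y = r • x := by
  have hinner : ‖inner ℝ x y‖ = ‖x‖ * ‖y‖ := by
    have hsq := o.inner_sq_add_areaForm_sq x y
    rw [h, zero_pow two_ne_zero, add_zero, ← mul_pow] at hsq
    rw [Real.norm_eq_abs, ← abs_of_nonneg (by positivity : 0 ≤ ‖x‖ * ‖y‖)]
    exact (sq_eq_sq_iff_abs_eq_abs _ _).1 hsq
  have hmultiple : x = 0 ∨ ∃ r : ℝ, y = r • x := ((norm_inner_eq_norm_tfae ℝ x y).out 0 2).1 hinner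
  exact hmultiple.resolve_left hx

lemma collinear_of_areaForm_eq_zero {P : Type*} [AddTorsor E P] {s : Set P}
    (h : ∀ p ∈ s, ∀ q ∈ s, ∀ r ∈ s, o.areaForm (q -ᵥ p) (r -ᵥ p) = 0) : Collinear ℝ s := by
  rcases s.subsingleton_or_nontrivial with hs | ⟨p, hp, q, hq, hpq⟩
  · obtain rfl | ⟨p, rfl⟩ := hs.eq_empty_or_singleton
    · exact collinear_empty ℝ P
    · exact collinear_singleton ℝ p
  · rw [collinear_iff_of_mem hp]
    refine ⟨q -ᵥ p, fun r hr ↦ ?_⟩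
    obtain ⟨c, hc⟩ :=
      exists_eq_smul_of_areaForm_eq_zero o (vsub_ne_zero.2 hpq.symm) (h p hp q hq r hr)
    exact ⟨c, (eq_vadd_iff_vsub_eq _ _ _).2 hc⟩

lemma abs_areaForm_smul_add_le {u e f : E} {s t δ : ℝ} (hs : |s| ≤ 1) (ht : |t| ≤ 1)
    (he : ‖e‖ ≤ δ) (hf : ‖f‖ ≤ δ) :
    |o.areaForm (s • u + e) (t • u + f)| ≤ δ * (2 * ‖u‖ + δ) := by
  have hexpand : o.areaForm (s • u + e) (t • u + f) =
      o.areaForm u (s • f - t • e) + o.areaForm e f := by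
    simp only [map_add, map_sub, map_smul, LinearMap.add_apply, LinearMap.smul_apply, smul_eq_mul,
      o.areaForm_apply_self, o.areaForm_swap e u]
    ring
  have hlinear : ‖s • f - t • e‖ ≤ 2 * δ :=
    calc ‖s • f - t • e‖ ≤ ‖s • f‖ + ‖t • e‖ := norm_sub_le _ _
      _ = |s| * ‖f‖ + |t| * ‖e‖ := by simp only [norm_smul, Real.norm_eq_abs]
      _ ≤ 1 * δ + 1 * δ := by gcongr
      _ = 2 * δ := by ring
  have hδ : 0 ≤ δ := (norm_nonneg e).trans he
  calc |o.areaForm (s • u + e) (t • u + f)|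
      ≤ |o.areaForm u (s • f - t • e)| + |o.areaForm e f| := hexpand ▸ abs_add_le _ _
    _ ≤ ‖u‖ * ‖s • f - t • e‖ + ‖e‖ * ‖f‖ :=
        add_le_add (o.abs_areaForm_le _ _) (o.abs_areaForm_le _ _)
    _ ≤ ‖u‖ * (2 * δ) + δ * δ := by gcongr
    _ = δ * (2 * ‖u‖ + δ) := by ring

end AreaForm

section Segment

variable {E : Type*} [SeminormedAddCommGroup E] [NormedSpace ℝ E]

lemma exists_norm_sub_lineMap_le_of_infDist_segment_le {A B p : E} {ε : ℝ}
    (hp : Metric.infDist p (segment ℝ A B) ≤ ε) :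
    ∃ t ∈ Set.Icc (0 : ℝ) 1, ‖p - AffineMap.lineMap A B t‖ ≤ ε := by
  have hcompact : IsCompact (segment ℝ A B) := by
    rw [segment_eq_image_lineMap]
    exact isCompact_Icc.image AffineMap.lineMap_continuous
  obtain ⟨y, hy, hdist⟩ := hcompact.exists_infDist_eq_dist ⟨A, left_mem_segment ℝ A B⟩ p
  rw [segment_eq_image_lineMap] at hy
  obtain ⟨t, ht, rfl⟩ := hy
  exact ⟨t, ht, by rwa [← dist_eq_norm, ← hdist]⟩

lemma exists_sub_eq_smul_add_of_infDist_segment_le {A B p q : E} {ε : ℝ}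
    (hp : Metric.infDist p (segment ℝ A B) ≤ ε) (hq : Metric.infDist q (segment ℝ A B) ≤ ε) :
    ∃ (s : ℝ) (e : E), |s| ≤ 1 ∧ ‖e‖ ≤ 2 * ε ∧ q - p = s • (B - A) + e := by
  obtain ⟨a, ha, hpa⟩ := exists_norm_sub_lineMap_le_of_infDist_segment_le hp
  obtain ⟨b, hb, hqb⟩ := exists_norm_sub_lineMap_le_of_infDist_segment_le hq
  refine ⟨b - a, (q - AffineMap.lineMap A B b) - (p - AffineMap.lineMap A B a), ?_, ?_, ?_⟩
  · exact abs_sub_le_iff.2 ⟨by linarith [ha.1, hb.2], by linarith [ha.2, hb.1]⟩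
  · linarith [norm_sub_le (q - AffineMap.lineMap A B b) (p - AffineMap.lineMap A B a)]
  · simp only [AffineMap.lineMap_apply_module']
    module

end Segment

lemma abs_areaForm_sub_sub_le_of_infDist_segment_le {E : Type*} [NormedAddCommGroup E]
    [InnerProductSpace ℝ E] [Fact (finrank ℝ E = 2)] (o : Orientation ℝ E (Fin 2))
    {A B p q r : E} {ε : ℝ} (hp : Metric.infDist p (segment ℝ A B) ≤ ε)
    (hq : Metric.infDist q (segment ℝ A B) ≤ ε) (hr : Metric.infDist r (segment ℝ A B) ≤ ε) :
    |o.areaForm (q - p) (r - p)| ≤ 4 * ε * (dist A B + ε) := by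
  obtain ⟨s, e, hs, he, hqp⟩ := exists_sub_eq_smul_add_of_infDist_segment_le hp hq
  obtain ⟨t, f, ht, hf, hrp⟩ := exists_sub_eq_smul_add_of_infDist_segment_le hp hr
  rw [hqp, hrp, dist_comm, dist_eq_norm]
  exact (abs_areaForm_smul_add_le o hs ht he hf).trans_eq (by ring)

section Denominators

lemma exists_int_cast_eq_prod_den_mul {n : Type*} [Fintype n] (v : n → ℚ) (j : n) :
    ∃ z : ℤ, (z : ℚ) = (∏ k, (v k).den : ℕ) * v j := by
  obtain ⟨c, hc⟩ := Finset.dvd_prod_of_mem (fun k ↦ (v k).den) (Finset.mem_univ j)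
  refine ⟨c * (v j).num, ?_⟩
  calc ((c * (v j).num : ℤ) : ℚ) = c * (v j * (v j).den) := by
        rw [Rat.mul_den_eq_num, Int.cast_mul, Int.cast_natCast]
    _ = (∏ k, (v k).den : ℕ) * v j := by rw [hc, Nat.cast_mul]; ring

lemma one_le_prod_den_mul_abs_det {n : Type*} [Fintype n] [DecidableEq n] {A : Matrix n n ℚ}
    (hA : A.det ≠ 0) : 1 ≤ (∏ i, ∏ j, (A i j).den : ℕ) * |A.det| := by
  choose Z hZ using fun i ↦ exists_int_cast_eq_prod_den_mul (A i)
  have hdet : ((Matrix.of Z).det : ℚ) = (∏ i, ∏ j, (A i j).den : ℕ) * A.det := by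
    rw [Int.cast_det, Nat.cast_prod, ← Matrix.det_mul_column]
    congr 1
    ext i j
    exact hZ i j
  have hne : (Matrix.of Z).det ≠ 0 := by
    rw [← Int.cast_ne_zero (α := ℚ), hdet]
    exact mul_ne_zero (mod_cast (by positivity)) hA
  calc (1 : ℚ) ≤ |((Matrix.of Z).det : ℚ)| := by exact_mod_cast Int.one_le_abs hne
    _ = (∏ i, ∏ j, (A i j).den : ℕ) * |A.det| := by rw [hdet, abs_mul, Nat.abs_cast]

end Denominators

section EuclideanPlane

open scoped EuclideanSpace

/-- The orientation of the Euclidean plane for which the standard basis is positive. -/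
noncomputable abbrev stdOrientation : Orientation ℝ (EuclideanSpace ℝ (Fin 2)) (Fin 2) :=
  (EuclideanSpace.basisFun (Fin 2) ℝ).toBasis.orientation

/-- The rational matrix with rows `(xᵢ, yᵢ, 1)` for three points `(xᵢ, yᵢ)` of the plane, whose
determinant is twice the signed area of the triangle they span. -/
def triangleMatrix (v : Fin 3 → Fin 2 → ℚ) : Matrix (Fin 3) (Fin 3) ℚ :=
  Matrix.of fun i ↦ ![v i 0, v i 1, 1]

lemma areaForm_toE2_sub_sub_eq_det (v : Fin 3 → Fin 2 → ℚ) :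
    stdOrientation.areaForm
        ((toE2 fun j ↦ (v 1 j : ℝ)) - toE2 fun j ↦ (v 0 j : ℝ))
        ((toE2 fun j ↦ (v 2 j : ℝ)) - toE2 fun j ↦ (v 0 j : ℝ)) =
      (triangleMatrix v).det := by
  rw [Orientation.areaForm_to_volumeForm,
    stdOrientation.volumeForm_robust (EuclideanSpace.basisFun (Fin 2) ℝ) rfl, Basis.det_apply,
    Matrix.det_fin_two, Matrix.det_fin_three]
  simp only [triangleMatrix, toE2, WithLp.equiv_symm_apply, Basis.toMatrix_apply, map_sub,
    Finsupp.coe_sub, Pi.sub_apply, OrthonormalBasis.coe_toBasis_repr_apply,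
    EuclideanSpace.basisFun_repr, Matrix.of_apply, Matrix.cons_val, mul_one, one_mul,
    Rat.cast_sub, Rat.cast_add, Rat.cast_mul]
  ring

lemma prod_den_triangleMatrix_le {v : Fin 3 → Fin 2 → ℚ} {M : ℕ}
    (hv : ∀ i j, (v i j).den ≤ M) : ∏ i, ∏ j, (triangleMatrix v i j).den ≤ M ^ 6 :=
  calc ∏ i, ∏ j, (triangleMatrix v i j).den = ∏ i, (v i 0).den * (v i 1).den := by
        simp [triangleMatrix, Fin.prod_univ_three]
    _ ≤ ∏ _i : Fin 3, M * M := by gcongr <;> apply hv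
    _ = M ^ 6 := by simp only [Finset.prod_const, Finset.card_univ, Fintype.card_fin]; ring

lemma det_triangleMatrix_eq_zero_of_abs_mul_lt_one {v : Fin 3 → Fin 2 → ℚ} {M : ℕ}
    (hv : ∀ i j, (v i j).den ≤ M) (h : |(triangleMatrix v).det| * M ^ 6 < 1) :
    (triangleMatrix v).det = 0 := by
  by_contra hne
  have hden : (∏ i, ∏ j, (triangleMatrix v i j).den : ℕ) ≤ (M : ℚ) ^ 6 :=
    mod_cast prod_den_triangleMatrix_le hv
  refine h.not_ge ?_
  calc 1 ≤ (∏ i, ∏ j, (triangleMatrix v i j).den : ℕ) * |(triangleMatrix v).det| :=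
        one_le_prod_den_mul_abs_det hne
    _ ≤ M ^ 6 * |(triangleMatrix v).det| := by gcongr
    _ = |(triangleMatrix v).det| * M ^ 6 := mul_comm _ _

theorem toy_diophantine_general {ι : Type*} {A B : EuclideanSpace ℝ (Fin 2)} {M : ℕ}
    {q : ι → Fin 2 → ℚ} (hden : ∀ i j, (q i j).den ≤ M) {ε : ℝ}
    (hε : 4 * ε * (dist A B + ε) * M ^ 6 < 1)
    (hclose : ∀ i, Metric.infDist (toE2 fun j ↦ (q i j : ℝ)) (segment ℝ A B) ≤ ε) :
    Collinear ℝ (Set.range fun i ↦ toE2 fun j ↦ (q i j : ℝ)) := by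
  apply collinear_of_areaForm_eq_zero stdOrientation
  rintro _ ⟨i, rfl⟩ _ ⟨j, rfl⟩ _ ⟨k, rfl⟩
  let v : Fin 3 → Fin 2 → ℚ := fun l ↦ q (![i, j, k] l)
  have harea := abs_areaForm_sub_sub_le_of_infDist_segment_le stdOrientation
    (hclose i) (hclose j) (hclose k)
  have hdet := areaForm_toE2_sub_sub_eq_det v
  have hsmall : |((triangleMatrix v).det : ℝ)| * M ^ 6 < 1 :=
    (mul_le_mul_of_nonneg_right (hdet ▸ harea) (by positivity)).trans_lt hε
  have hzero : (triangleMatrix v).det = 0 :=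
    det_triangleMatrix_eq_zero_of_abs_mul_lt_one (fun l ↦ hden _) (mod_cast hsmall)
  exact hdet.trans (by rw [hzero, Rat.cast_zero])

end EuclideanPlane

lemma four_mul_mul_one_add_mul_lt_one {ε c : ℝ} (hc : 1 ≤ c) (hε0 : 0 < ε)
    (hε : ε < 1 / 10 * c⁻¹) : 4 * ε * (1 + ε) * c < 1 := by
  have hεc : ε * c < 1 / 10 := (lt_mul_inv_iff₀ (by positivity)).1 hε
  have hε1 : ε ≤ 1 / 10 := (le_mul_of_one_le_right hε0.le hc).trans hεc.le
  calc 4 * ε * (1 + ε) * c = 4 * (1 + ε) * (ε * c) := by ring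
    _ ≤ 4 * (1 + 1 / 10) * (1 / 10) := by gcongr
    _ < 1 := by norm_num

/-- **toy diophantine remark of Section 4.**  Let `ℓ = [A,B]` be a segment
of length `1` in the Euclidean plane.  If `P₁, P₂, P₃` are rational points with all
coordinate denominators at most `M`, each lying within `ε` of `ℓ` with
`0 < ε < (1/10) M⁻⁶`, then `P₁, P₂, P₃` are collinear. -/
theorem toy_diophantine
    (A B : EuclideanSpace ℝ (Fin 2)) (hAB : dist A B = 1)
    (M : ℕ) (hM : 0 < M)
    (q : Fin 3 → Fin 2 → ℚ) (hden : ∀ i j, (q i j).den ≤ M)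
    (ε : ℝ) (hε0 : 0 < ε) (hεM : ε < (1 / 10) * ((M : ℝ) ^ 6)⁻¹)
    (hclose : ∀ i : Fin 3,
      Metric.infDist (toE2 fun j => (q i j : ℝ)) (segment ℝ A B) ≤ ε) :
    Collinear ℝ (Set.range fun i : Fin 3 => toE2 fun j => (q i j : ℝ)) := by
  have hM6 : (1 : ℝ) ≤ (M : ℝ) ^ 6 := one_le_pow₀ (mod_cast hM)
  exact toy_diophantine_general hden
    (hAB ▸ four_mul_mul_one_add_mul_lt_one hM6 hε0 hεM) hclose
end

section
/- (Lemma 4.7: points near a proper real subalgebra lie in a proper rational subalgebra) There exist constants c ≥ 1 and c' > 0 such that the following holds: for every ℝ-subalgebra S of E with S ≠ E, and all reals R ≥ 1, M ≥ 1 and ε > 0 satisfying ε·R^c·M^c < c', the set Z := { x ∈ D : ‖x‖ ≤ R, infdist(x, S) ≤ ε, denom_L(x) ≤ M } is contained in a proper ℚ-subalgebra of D, i.e. the ℚ-subalgebra generated by Z is not all of D. -/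
/-!
Suppose that `Z` generates `D`, and let `n = dim D`. Words of length `n + 1` in `Z ∪ {1}` span `D`
over `ℚ`, hence `E` over `ℝ`, so some of them form a real basis `w` of `E`. Compare `w` with a
rational basis `b` of `D` through the determinant of `w` in the coordinates of `b`.

* The words have denominators polynomial in `M` relative to the lattice spanned by `b`, so
  `|det w|` is at least a negative power of `M`.
* The words are products of elements close to `S`, hence are themselves close to `S`. Since `det`
  vanishes on families in the proper subspace `S`, and is Lipschitz on bounded sets, `|det w|` is at
  most `ε` times a power of `R`.

The two bounds are incompatible when `ε` is small compared with powers of `R⁻¹` and `M⁻¹`.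
-/

/-- The denominator of `x` relative to a lattice `L`: the least positive integer `m`
with `m • x ∈ L`. -/
noncomputable def latDenom {E : Type*} [Ring E] (L : Submodule ℤ E) (x : E) : ℕ :=
  sInf {m : ℕ | 0 < m ∧ (m : ℤ) • x ∈ L}

open scoped Pointwise

/-! ### Words spanning a generated algebra -/

section Words

variable {K A : Type*} [Field K] [Ring A] [Algebra K A]

theorem pow_eq_pow_of_finrank_le (P V : Submodule K A) [FiniteDimensional K V]
    (h1 : 1 ∈ P) (hPV : ∀ k, P ^ k ≤ V) {n m : ℕ} (hn : Module.finrank K V ≤ n) (hnm : n ≤ m) :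
    P ^ m = P ^ n := by
  have hmono : Monotone (P ^ · : ℕ → Submodule K A) := fun _ _ h =>
    pow_le_pow_right₀ (Submodule.one_le.2 h1) h
  have hfin (k : ℕ) : FiniteDimensional K (P ^ k : Submodule K A) :=
    Submodule.finiteDimensional_of_le (hPV k)
  have eq_of_finrank_eq {i j : ℕ} (hij : i ≤ j)
      (h : Module.finrank K (P ^ i : Submodule K A) = Module.finrank K (P ^ j : Submodule K A)) :
      P ^ i = P ^ j :=
    Submodule.eq_of_le_of_finrank_eq (hmono hij) h
  have stable {k : ℕ} (hk : Module.finrank K V ≤ k) :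
      Module.finrank K (P ^ k : Submodule K A) =
        Module.finrank K (P ^ Module.finrank K V : Submodule K A) := by
    refine Nat.stabilises_of_monotone (f := fun k => Module.finrank K (P ^ k : Submodule K A))
      (fun _ _ h => Submodule.finrank_mono (hmono h)) (fun k => Submodule.finrank_mono (hPV k))
      (fun k h => ?_) hk
    have hk : P ^ k = P ^ (k + 1) := eq_of_finrank_eq k.le_succ h
    have hk' : P ^ (k + 1) = P ^ (k + 2) := by
      calc P ^ (k + 1) = P ^ k * P := pow_succ P k
        _ = P ^ (k + 1) * P := by rw [← hk]
        _ = P ^ (k + 2) := (pow_succ P (k + 1)).symm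
    rw [hk']
  exact (eq_of_finrank_eq hnm ((stable hn).trans (stable (hn.trans hnm)).symm)).symm

theorem toSubmodule_adjoin_eq_span_pow (Z : Set A) [FiniteDimensional K (Algebra.adjoin K Z)]
    {n : ℕ} (hn : Module.finrank K (Algebra.adjoin K Z) ≤ n) :
    Subalgebra.toSubmodule (Algebra.adjoin K Z) = Submodule.span K (insert 1 Z ^ n) := by
  set V := Subalgebra.toSubmodule (Algebra.adjoin K Z)
  set P := Submodule.span K (insert 1 Z)
  rw [← Submodule.span_pow]
  have h1 : 1 ∈ P := Submodule.subset_span (Set.mem_insert 1 Z)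
  have hPV (k : ℕ) : P ^ k ≤ V := by
    have hP : P ≤ V := Submodule.span_le.2
      (Set.insert_subset (one_mem (Algebra.adjoin K Z)) Algebra.subset_adjoin)
    induction k with
    | zero => exact Submodule.one_le.2 (one_mem (Algebra.adjoin K Z))
    | succ k ih => exact pow_succ P k ▸ Submodule.mul_le.2 fun _ hx _ hy =>
        (Algebra.adjoin K Z).mul_mem (ih hx) (hP hy)
  have stable {m : ℕ} (hm : n ≤ m) : P ^ m = P ^ n :=
    pow_eq_pow_of_finrank_le P V h1 hPV hn hm
  have hmul (x y : A) (hx : x ∈ P ^ n) (hy : y ∈ P ^ n) : x * y ∈ P ^ n := by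
    rw [← stable (Nat.le_add_left n n), pow_add]
    exact Submodule.mul_mem_mul hx hy
  refine le_antisymm ?_ (hPV n)
  refine Algebra.adjoin_le (S := (P ^ n).toSubalgebra (one_pow (M := A) n ▸
    Submodule.pow_mem_pow P h1 n) hmul) fun z hz => ?_
  have hzP : z ∈ P := Submodule.subset_span (Set.mem_insert_of_mem 1 hz)
  rw [SetLike.mem_coe, Submodule.mem_toSubalgebra, ← stable n.le_succ, pow_succ']
  simpa using Submodule.mul_mem_mul hzP (Submodule.pow_mem_pow P h1 n)

theorem span_pow_eq_top_of_adjoin_eq {F ι : Type*} [CommRing F] [Algebra F A] [SMul K F]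
    [IsScalarTower K F A] [Fintype ι] (b : Module.Basis ι F A) {D : Subalgebra K A}
    (hbD : Submodule.span K (Set.range b) = Subalgebra.toSubmodule D) {Z : Set A}
    (hZ : Algebra.adjoin K Z = D) {k : ℕ} (hk : Fintype.card ι ≤ k) :
    Submodule.span F (insert 1 Z ^ k) = ⊤ := by
  subst hZ
  have hfin : FiniteDimensional K (Subalgebra.toSubmodule (Algebra.adjoin K Z)) :=
    hbD ▸ FiniteDimensional.span_of_finite K (Set.finite_range b)
  have : FiniteDimensional K (Algebra.adjoin K Z) := hfin
  have hrank : Module.finrank K (Algebra.adjoin K Z) ≤ k := by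
    rw [← Subalgebra.finrank_toSubmodule, ← hbD]
    exact (finrank_range_le_card b).trans hk
  rw [eq_top_iff, ← b.span_eq, Submodule.span_le]
  calc Set.range b ⊆ Submodule.span K (Set.range b) := Submodule.subset_span
    _ = Submodule.span K (insert 1 Z ^ k) := by
      rw [hbD, toSubmodule_adjoin_eq_span_pow Z hrank]
    _ ⊆ Submodule.span F (insert 1 Z ^ k) := Submodule.span_subset_span K F _

end Words

/-! ### Denominators -/

section Denominators

theorem exists_pos_nsmul_mem {E : Type*} [AddCommGroup E] [Module ℚ E] {Λ : Submodule ℤ E} {x : E}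
    (hx : x ∈ Submodule.span ℚ (Λ : Set E)) : ∃ q : ℕ, 0 < q ∧ q • x ∈ Λ := by
  obtain ⟨⟨t, ht⟩, htx⟩ :=
    multiple_mem_span_of_mem_localization_span (nonZeroDivisors ℤ) ℚ (Λ : Set E) x hx
  rw [Submodule.span_eq, Submonoid.mk_smul] at htx
  refine ⟨t.natAbs, Int.natAbs_pos.2 (nonZeroDivisors.ne_zero ht), ?_⟩
  rw [← natCast_zsmul]
  rcases abs_choice t with h | h <;> simpa [h] using htx

theorem exists_pos_nsmul_mem_of_fg {E : Type*} [AddCommGroup E] [Module ℚ E]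
    {N Λ : Submodule ℤ E} (hN : N.FG) (hNΛ : ∀ x ∈ N, x ∈ Submodule.span ℚ (Λ : Set E)) :
    ∃ q : ℕ, 0 < q ∧ ∀ x ∈ N, q • x ∈ Λ := by
  induction N, hN using Submodule.fg_induction with
  | singleton x =>
    obtain ⟨q, hq, hqx⟩ := exists_pos_nsmul_mem (hNΛ x (Submodule.mem_span_singleton_self x))
    refine ⟨q, hq, fun y hy => ?_⟩
    obtain ⟨a, rfl⟩ := Submodule.mem_span_singleton.1 hy
    rw [smul_comm]
    exact Λ.smul_mem a hqx
  | sup N₁ N₂ _ _ ih₁ ih₂ =>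
    obtain ⟨q₁, hq₁, h₁⟩ := ih₁ fun x hx => hNΛ x (Submodule.mem_sup_left hx)
    obtain ⟨q₂, hq₂, h₂⟩ := ih₂ fun x hx => hNΛ x (Submodule.mem_sup_right hx)
    refine ⟨q₁ * q₂, Nat.mul_pos hq₁ hq₂, fun x hx => ?_⟩
    obtain ⟨x₁, hx₁, x₂, hx₂, rfl⟩ := Submodule.mem_sup.1 hx
    rw [smul_add]
    refine add_mem ?_ ?_
    · rw [mul_comm, mul_smul]
      exact nsmul_mem (h₁ x₁ hx₁) q₂
    · rw [mul_smul]
      exact nsmul_mem (h₂ x₂ hx₂) q₁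

theorem exists_pos_nsmul_mul_mem {E : Type*} [Ring E] [Algebra ℚ E] (D : Subalgebra ℚ E)
    {L Λ : Submodule ℤ E} (hL : L.FG) (hLD : (L : Set E) ⊆ D) (hΛ : Λ.FG)
    (hΛD : Submodule.span ℚ (Λ : Set E) = Subalgebra.toSubmodule D) :
    ∃ q : ℕ, 0 < q ∧ q • (1 : E) ∈ Λ ∧ (∀ x ∈ L, q • x ∈ Λ) ∧
      ∀ x ∈ Λ, ∀ y ∈ Λ, q • (x * y) ∈ Λ := by
  have mem_D {x : E} (hx : x ∈ Λ) : x ∈ D := by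
    rw [← Subalgebra.mem_toSubmodule, ← hΛD]
    exact Submodule.subset_span hx
  have hle : Submodule.span ℤ {1} ⊔ L ⊔ Λ * Λ ≤
      (Subalgebra.toSubmodule D).restrictScalars ℤ :=
    sup_le (sup_le ((Submodule.span_singleton_le_iff_mem _ _).2 (one_mem D)) hLD)
      (Submodule.mul_le.2 fun _ hx _ hy => D.mul_mem (mem_D hx) (mem_D hy))
  obtain ⟨q, hq, h⟩ := exists_pos_nsmul_mem_of_fg (Λ := Λ)
    (((Submodule.fg_span_singleton 1).sup hL).sup (hΛ.mul hΛ)) fun x hx => hΛD ▸ hle hx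
  exact ⟨q, hq,
    h 1 (Submodule.mem_sup_left (Submodule.mem_sup_left (Submodule.mem_span_singleton_self 1))),
    fun x hx => h x (Submodule.mem_sup_left (Submodule.mem_sup_right hx)),
    fun x hx y hy => h _ (Submodule.mem_sup_right (Submodule.mul_mem_mul hx hy))⟩

/-- `x` has a denominator at most `N` relative to `Λ`. Unlike a bound on `latDenom Λ x`, this
forces some positive multiple of `x` to lie in `Λ`. -/
def HasDenomLE {E : Type*} [AddCommGroup E] (Λ : Submodule ℤ E) (N : ℝ) (x : E) : Prop :=
  ∃ m : ℕ, 0 < m ∧ (m : ℝ) ≤ N ∧ m • x ∈ Λ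

theorem hasDenomLE_latDenom {E : Type*} [Ring E] [Module ℚ E] {L : Submodule ℤ E} {x : E}
    (hx : x ∈ Submodule.span ℚ (L : Set E)) : HasDenomLE L (latDenom L x) x := by
  obtain ⟨q, hq, hqx⟩ := exists_pos_nsmul_mem hx
  have hne : {m : ℕ | 0 < m ∧ (m : ℤ) • x ∈ L}.Nonempty :=
    ⟨q, hq, by rwa [natCast_zsmul]⟩
  obtain ⟨hpos, hmem⟩ := Nat.sInf_mem hne
  exact ⟨latDenom L x, hpos, le_rfl, by rwa [natCast_zsmul] at hmem⟩

namespace HasDenomLE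

variable {E : Type*} {q : ℕ} {N N' : ℝ}

theorem mono [AddCommGroup E] {Λ : Submodule ℤ E} {x : E} (hx : HasDenomLE Λ N x) (hN : N ≤ N') :
    HasDenomLE Λ N' x :=
  let ⟨m, hm, hmN, hmx⟩ := hx
  ⟨m, hm, hmN.trans hN, hmx⟩

theorem of_nsmul_mem [AddCommGroup E] {L Λ : Submodule ℤ E} {x : E} (hq : 0 < q)
    (hqL : ∀ y ∈ L, q • y ∈ Λ) (hx : HasDenomLE L N x) : HasDenomLE Λ (q * N) x := by
  obtain ⟨m, hm, hmN, hmx⟩ := hx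
  refine ⟨q * m, Nat.mul_pos hq hm, ?_, ?_⟩
  · push_cast
    gcongr
  · rw [mul_smul]
    exact hqL _ hmx

variable [Ring E] {Λ : Submodule ℤ E} (hq : 0 < q) (hqΛ : ∀ x ∈ Λ, ∀ y ∈ Λ, q • (x * y) ∈ Λ)
include hq hqΛ

theorem mul {x y : E} (hx : HasDenomLE Λ N x) (hy : HasDenomLE Λ N' y) :
    HasDenomLE Λ (q * (N * N')) (x * y) := by
  obtain ⟨m, hm, hmN, hmx⟩ := hx
  obtain ⟨r, hr, hrN, hry⟩ := hy
  refine ⟨q * (m * r), by positivity, ?_, ?_⟩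
  · push_cast
    have := m.cast_nonneg.trans hmN
    gcongr
  · rw [mul_smul, ← smul_mul_smul_comm]
    exact hqΛ _ hmx _ hry

theorem of_mem_pow {Y : Set E} (hY : ∀ x ∈ Y, HasDenomLE Λ N x) (k : ℕ) :
    ∀ w ∈ Y ^ (k + 1), HasDenomLE Λ ((q * N) ^ (k + 1)) w := by
  induction k with
  | zero =>
    intro w hw
    rw [zero_add, pow_one] at hw ⊢
    obtain ⟨m, hm, hmN, hmw⟩ := hY w hw
    exact ⟨m, hm, hmN.trans (le_mul_of_one_le_left (m.cast_nonneg.trans hmN)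
      (Nat.one_le_cast.2 hq)), hmw⟩
  | succ k ih =>
    intro w hw
    rw [pow_succ] at hw
    obtain ⟨w', hw', x, hx, rfl⟩ := Set.mem_mul.1 hw
    refine ((ih w' hw').mul hq hqΛ (hY x hx)).mono (le_of_eq ?_)
    ring

end HasDenomLE

end Denominators

/-! ### Approximation by elements of a subalgebra -/

/-- `x` has norm at most `B` and is approximated by an element of `S` of norm at most `B`, with
error at most `B * δ`. Measuring the error relative to `B` makes `δ` additive under products. -/
def IsNear {E : Type*} [SeminormedAddCommGroup E] (S : Set E) (B δ : ℝ) (x : E) : Prop :=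
  ‖x‖ ≤ B ∧ ∃ s ∈ S, ‖s‖ ≤ B ∧ ‖x - s‖ ≤ B * δ

namespace IsNear

variable {E : Type*} {B B' δ δ' : ℝ}

theorem mul [NonUnitalSeminormedRing E] {σ : Type*} [SetLike σ E] [MulMemClass σ E] {S : σ}
    {x y : E} (hx : IsNear (S : Set E) B δ x) (hy : IsNear (S : Set E) B' δ' y) :
    IsNear (S : Set E) (B * B') (δ + δ') (x * y) := by
  obtain ⟨hxB, s, hs, hsB, hxs⟩ := hx
  obtain ⟨hyB, t, ht, htB, hyt⟩ := hy
  refine ⟨norm_mul_le_of_le hxB hyB, s * t, mul_mem hs ht, norm_mul_le_of_le hsB htB, ?_⟩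
  calc ‖x * y - s * t‖ = ‖(x - s) * y + s * (y - t)‖ := by congr 1; noncomm_ring
    _ ≤ B * δ * B' + B * (B' * δ') :=
      norm_add_le_of_le (norm_mul_le_of_le hxs hyB) (norm_mul_le_of_le hsB hyt)
    _ = B * B' * (δ + δ') := by ring

theorem of_mem_pow [SeminormedRing E] {σ : Type*} [SetLike σ E] [MulMemClass σ E] {S : σ}
    {Y : Set E} (hY : ∀ x ∈ Y, IsNear (S : Set E) B δ x) (k : ℕ) :
    ∀ w ∈ Y ^ (k + 1), IsNear (S : Set E) (B ^ (k + 1)) ((k + 1) * δ) w := by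
  induction k with
  | zero => simpa using hY
  | succ k ih =>
    intro w hw
    rw [pow_succ] at hw
    obtain ⟨w', hw', x, hx, rfl⟩ := Set.mem_mul.1 hw
    convert (ih w' hw').mul (hY x hx) using 1
    · exact pow_succ B (k + 1)
    · rw [Nat.cast_succ, add_one_mul _ δ]

theorem of_infDist_le [NormedAddCommGroup E] [NormedSpace ℝ E] [FiniteDimensional ℝ E]
    {S : Submodule ℝ E} {x : E} (hB : 1 ≤ B) (hxB : 2 * ‖x‖ ≤ B)
    (hxS : Metric.infDist x (S : Set E) ≤ δ) : IsNear (S : Set E) B δ x := by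
  obtain ⟨s, hs, hdist⟩ :=
    S.closed_of_finiteDimensional.exists_infDist_eq_dist ⟨0, zero_mem S⟩ x
  have hxs : ‖x - s‖ = Metric.infDist x (S : Set E) := by rw [hdist, dist_eq_norm]
  have hxs_le : ‖x - s‖ ≤ ‖x‖ := by
    simpa [hxs] using Metric.infDist_le_dist_of_mem (x := x) (zero_mem S)
  have hsx : ‖s‖ ≤ ‖x‖ + ‖x - s‖ := norm_le_insert x s
  have hδ : 0 ≤ δ := Metric.infDist_nonneg.trans hxS
  refine ⟨by linarith [norm_nonneg x], s, hs, by linarith, ?_⟩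
  exact hxs.trans_le (hxS.trans (le_mul_of_one_le_left hδ hB))

theorem of_mem [SeminormedAddCommGroup E] {S : Set E} {x : E} (hx : x ∈ S) (hxB : ‖x‖ ≤ B)
    (hδ : 0 ≤ δ) : IsNear S B δ x :=
  ⟨hxB, x, hx, hxB, by simpa using mul_nonneg ((norm_nonneg x).trans hxB) hδ⟩

end IsNear

/-! ### Bounds for the determinant -/

section Det

variable {E ι : Type*} [Fintype ι] [DecidableEq ι]

theorem one_le_pow_mul_abs_det [AddCommGroup E] [Module ℝ E] (b w : Module.Basis ι ℝ E) {N : ℝ}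
    (hw : ∀ i, HasDenomLE (Submodule.span ℤ (Set.range b)) N (w i)) :
    1 ≤ N ^ Fintype.card ι * |b.det w| := by
  choose m hm hmN hmw using hw
  let u : ι → Submodule.span ℤ (Set.range b) := fun i => ⟨m i • w i, hmw i⟩
  have hdet : (((b.restrictScalars ℤ).det u : ℤ) : ℝ) = (∏ i, (m i : ℝ)) * b.det w := by
    calc (((b.restrictScalars ℤ).det u : ℤ) : ℝ) = b.det fun i => (m i : ℝ) • w i := by
          rw [Module.Basis.det_apply, Module.Basis.det_apply, Int.cast_det]
          simp_rw [Nat.cast_smul_eq_nsmul]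
          exact congrArg Matrix.det (b.restrictScalars_toMatrix ℤ u)
      _ = (∏ i, (m i : ℝ)) * b.det w := by rw [AlternatingMap.map_smul_univ, smul_eq_mul]
  have hprod : ∏ i, (m i : ℝ) ≠ 0 :=
    Finset.prod_ne_zero_iff.2 fun i _ => Nat.cast_ne_zero.2 (hm i).ne'
  have hne : (b.restrictScalars ℤ).det u ≠ 0 := by
    rw [← Int.cast_ne_zero (α := ℝ), hdet]
    exact mul_ne_zero hprod (b.isUnit_det w).ne_zero
  calc (1 : ℝ) ≤ |(((b.restrictScalars ℤ).det u : ℤ) : ℝ)| := by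
        exact_mod_cast Int.one_le_abs hne
    _ = (∏ i, (m i : ℝ)) * |b.det w| := by
        rw [hdet, abs_mul, abs_of_nonneg (by positivity)]
    _ ≤ N ^ Fintype.card ι * |b.det w| := by
        gcongr
        calc ∏ i, (m i : ℝ) ≤ ∏ _i : ι, N :=
              Finset.prod_le_prod (fun i _ => (m i).cast_nonneg) fun i _ => hmN i
          _ = N ^ Fintype.card ι := by rw [Finset.prod_const, Finset.card_univ]

theorem det_eq_zero_of_mem_of_ne_top {K : Type*} [Field K] [AddCommGroup E] [Module K E]
    (b : Module.Basis ι K E) {S : Submodule K E} (hS : S ≠ ⊤) {s : ι → E}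
    (hs : ∀ i, s i ∈ S) : b.det s = 0 := by
  by_contra hne
  have hspan := ((b.is_basis_iff_det).2 (isUnit_iff_ne_zero.2 hne)).2
  exact hS (top_le_iff.1 (hspan ▸ Submodule.span_le.2 (Set.range_subset_iff.2 hs)))

theorem exists_abs_det_le_of_isNear [NormedAddCommGroup E] [NormedSpace ℝ E]
    (b : Module.Basis ι ℝ E) :
    ∃ C : ℝ, 0 < C ∧ ∀ S : Submodule ℝ E, S ≠ ⊤ → ∀ (B δ : ℝ) (w : ι → E),
      (∀ i, IsNear (S : Set E) B δ (w i)) → |b.det w| ≤ C * (B ^ Fintype.card ι * δ) := by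
  have : FiniteDimensional ℝ E := b.finiteDimensional_of_finite
  have hcont : Continuous b.det := by
    simp_rw [funext b.det_apply]
    exact Continuous.matrix_det <| continuous_matrix fun i j =>
      (b.coord i).continuous_of_finiteDimensional.comp (continuous_apply j)
  obtain ⟨C, hC, hdet⟩ := b.det.toMultilinearMap.exists_bound_of_continuous hcont
  refine ⟨C * (Fintype.card ι + 1), by positivity, fun S hS B δ w hw => ?_⟩
  choose hwB s hs hsB hws using hw
  have hι : Nonempty ι := by
    have : Nontrivial (Submodule ℝ E) := nontrivial_of_ne S ⊤ hS
    have : Nontrivial E := (Submodule.nontrivial_iff ℝ).1 this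
    exact b.index_nonempty
  have hB : 0 ≤ B := (norm_nonneg _).trans (hwB hι.some)
  have hBδ : 0 ≤ B * δ := (norm_nonneg _).trans (hws hι.some)
  have hmax : max ‖w‖ ‖s‖ ≤ B :=
    max_le ((pi_norm_le_iff_of_nonneg hB).2 hwB) ((pi_norm_le_iff_of_nonneg hB).2 hsB)
  have hdiff : ‖w - s‖ ≤ B * δ := (pi_norm_le_iff_of_nonneg hBδ).2 hws
  have hpow : B ^ (Fintype.card ι - 1) * (B * δ) = B ^ Fintype.card ι * δ := by
    rw [← mul_assoc, pow_sub_one_mul Fintype.card_ne_zero]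
  calc |b.det w| = ‖b.det w - b.det s‖ := by
        rw [det_eq_zero_of_mem_of_ne_top b hS hs, sub_zero, Real.norm_eq_abs]
    _ ≤ C * Fintype.card ι * max ‖w‖ ‖s‖ ^ (Fintype.card ι - 1) * ‖w - s‖ :=
      b.det.toMultilinearMap.norm_image_sub_le_of_bound hC.le hdet w s
    _ ≤ C * Fintype.card ι * B ^ (Fintype.card ι - 1) * (B * δ) := by gcongr
    _ = C * Fintype.card ι * (B ^ Fintype.card ι * δ) := by rw [mul_assoc, hpow]
    _ ≤ C * (Fintype.card ι + 1) * (B ^ Fintype.card ι * δ) := by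
      have : 0 ≤ B ^ Fintype.card ι * δ := hpow ▸ mul_nonneg (pow_nonneg hB _) hBδ
      gcongr
      exact le_add_of_nonneg_right zero_le_one

end Det

theorem exists_one_le_of_span_pow_eq_top {E ι : Type*} [NormedRing E] [NormedAlgebra ℝ E]
    [Fintype ι] (b : Module.Basis ι ℝ E) {q : ℕ} (hq : 0 < q)
    (hqb : ∀ x ∈ Submodule.span ℤ (Set.range b), ∀ y ∈ Submodule.span ℤ (Set.range b),
      q • (x * y) ∈ Submodule.span ℤ (Set.range b)) :
    ∃ C : ℝ, 0 < C ∧ ∀ S : Subalgebra ℝ E, S ≠ ⊤ → ∀ (Y : Set E) (k : ℕ) (B N δ : ℝ),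
      (∀ x ∈ Y, IsNear (S : Set E) B δ x) →
      (∀ x ∈ Y, HasDenomLE (Submodule.span ℤ (Set.range b)) N x) →
      Submodule.span ℝ (Y ^ (k + 1)) = ⊤ →
      1 ≤ C * ((q * N * B) ^ ((k + 1) * Fintype.card ι) * ((k + 1) * δ)) := by
  classical
  obtain ⟨C, hC, hdet⟩ := exists_abs_det_le_of_isNear b
  refine ⟨C, hC, fun S hS Y k B N δ hnear hdenom hspan => ?_⟩
  let e := Module.Basis.ofSpan hspan.ge
  let w := e.reindex (e.indexEquiv b)
  have hwY (i : ι) : w i ∈ Y ^ (k + 1) :=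
    Module.Basis.ofSpan_subset hspan.ge (by simp [w, e])
  have hlower := one_le_pow_mul_abs_det b w fun i =>
    HasDenomLE.of_mem_pow hq hqb hdenom k (w i) (hwY i)
  have hupper := hdet (Subalgebra.toSubmodule S) (by simpa using hS) _ _ w fun i =>
    IsNear.of_mem_pow hnear k (w i) (hwY i)
  have hpos : 0 < ((q * N) ^ (k + 1)) ^ Fintype.card ι :=
    pos_of_mul_pos_left (one_pos.trans_le hlower) (abs_nonneg _)
  calc (1 : ℝ) ≤ ((q * N) ^ (k + 1)) ^ Fintype.card ι * |b.det w| := hlower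
    _ ≤ ((q * N) ^ (k + 1)) ^ Fintype.card ι *
        (C * ((B ^ (k + 1)) ^ Fintype.card ι * ((k + 1) * δ))) := by gcongr
    _ = C * ((q * N * B) ^ ((k + 1) * Fintype.card ι) * ((k + 1) * δ)) := by
      rw [mul_pow (q * N) B, pow_mul, pow_mul]
      ring

theorem exists_one_le_of_adjoin_eq {E ι : Type*} [NormedRing E] [NormedAlgebra ℝ E] [Algebra ℚ E]
    [Fintype ι] (b : Module.Basis ι ℝ E) {D : Subalgebra ℚ E}
    (hbD : Submodule.span ℚ (Set.range b) = Subalgebra.toSubmodule D) {L : Submodule ℤ E}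
    (hL : L.FG) (hLD : (L : Set E) ⊆ D) :
    ∃ C : ℝ, 0 < C ∧ ∀ S : Subalgebra ℝ E, S ≠ ⊤ → ∀ (Z : Set E) (R M ε : ℝ),
      1 ≤ R → 1 ≤ M → 0 ≤ ε →
      (∀ x ∈ Z, ‖x‖ ≤ R ∧ Metric.infDist x (S : Set E) ≤ ε ∧ HasDenomLE L M x) →
      Algebra.adjoin ℚ Z = D →
      1 ≤ C * (ε * R ^ ((Fintype.card ι + 1) * Fintype.card ι) *
        M ^ ((Fintype.card ι + 1) * Fintype.card ι)) := by
  have : FiniteDimensional ℝ E := b.finiteDimensional_of_finite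
  set n := Fintype.card ι
  set Λ := Submodule.span ℤ (Set.range b)
  obtain ⟨q, hq, hq1, hqL, hqΛ⟩ := exists_pos_nsmul_mul_mem D hL hLD (Λ := Λ)
    (Submodule.fg_span (Set.finite_range b)) (by rw [Submodule.span_span_of_tower, hbD])
  obtain ⟨C, hC, hbound⟩ := exists_one_le_of_span_pow_eq_top b hq hqΛ
  let κ : ℝ := max 2 ‖(1 : E)‖
  have hκ : 2 ≤ κ := le_max_left _ _
  refine ⟨C * ((q * q * κ) ^ ((n + 1) * n) * (n + 1)), by positivity,
    fun S hS Z R M ε hR hM hε hZ hadj => ?_⟩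
  have hnear : ∀ x ∈ insert 1 Z, IsNear (S : Set E) (κ * R) ε x := by
    refine Set.forall_mem_insert.2 ⟨IsNear.of_mem (one_mem S)
      ((le_max_right _ _).trans (le_mul_of_one_le_right (by positivity) hR)) hε, fun x hx => ?_⟩
    obtain ⟨hxR, hxS, -⟩ := hZ x hx
    exact IsNear.of_infDist_le (S := Subalgebra.toSubmodule S)
      (one_le_mul_of_one_le_of_one_le (one_le_two.trans hκ) hR) (by gcongr) hxS
  have hdenom : ∀ x ∈ insert 1 Z, HasDenomLE Λ (q * M) x :=
    Set.forall_mem_insert.2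
      ⟨⟨q, hq, le_mul_of_one_le_right q.cast_nonneg hM, hq1⟩,
        fun x hx => (hZ x hx).2.2.of_nsmul_mem hq hqL⟩
  have hspan : Submodule.span ℝ (insert 1 Z ^ (n + 1)) = ⊤ :=
    span_pow_eq_top_of_adjoin_eq b hbD hadj n.le_succ
  convert hbound S hS _ n _ _ _ hnear hdenom hspan using 1
  simp only [mul_pow]
  ring

/-- **Lemma 4.7: points near a proper real subalgebra lie in a proper
rational subalgebra.**  `E` is a finite-dimensional normed `ℝ`-algebra with
submultiplicative norm, `D` a `ℚ`-subalgebra of `E` having a `ℚ`-basis which is an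
`ℝ`-basis of `E`, and `L ⊆ D` a finitely generated `ℤ`-lattice spanning `D` over `ℚ`.
Then there are constants `c ≥ 1` and `c' > 0` such that: for every proper
`ℝ`-subalgebra `S ⊊ E` and all `R, M ≥ 1`, `ε > 0` with `ε R^c M^c < c'`, the set
`Z = {x ∈ D : ‖x‖ ≤ R, infdist(x,S) ≤ ε, denom_L(x) ≤ M}` generates a proper
`ℚ`-subalgebra of `D`. -/
theorem near_real_subalgebra_in_rational_subalgebra
    {E : Type*} [NormedRing E] [NormedAlgebra ℝ E] [FiniteDimensional ℝ E]
    [Algebra ℚ E] [IsScalarTower ℚ ℝ E]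
    (D : Subalgebra ℚ E)
    (n : ℕ) (v : Fin n → E) (hvD : ∀ i, v i ∈ D)
    (hvQind : LinearIndependent ℚ v)
    (hvQspan : Submodule.span ℚ (Set.range v) = Subalgebra.toSubmodule D)
    (hvRind : LinearIndependent ℝ v)
    (hvRspan : Submodule.span ℝ (Set.range v) = ⊤)
    (L : Submodule ℤ E) (hLfg : L.FG) (hLD : (L : Set E) ⊆ (D : Set E))
    (hLspan : Submodule.span ℚ (L : Set E) = Subalgebra.toSubmodule D) :
    ∃ c c' : ℝ, 1 ≤ c ∧ 0 < c' ∧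
      ∀ S : Subalgebra ℝ E, S ≠ ⊤ →
        ∀ R M ε : ℝ, 1 ≤ R → 1 ≤ M → 0 < ε → ε * R ^ c * M ^ c < c' →
          Algebra.adjoin ℚ
            {x : E | x ∈ D ∧ ‖x‖ ≤ R ∧ Metric.infDist x (S : Set E) ≤ ε ∧
              (latDenom L x : ℝ) ≤ M} ≠ D := by
  obtain ⟨b, rfl⟩ : ∃ b : Module.Basis (Fin n) ℝ E, ⇑b = v :=
    ⟨Module.Basis.mk hvRind hvRspan.ge, Module.Basis.coe_mk _ _⟩
  obtain ⟨C, hC, hbound⟩ := exists_one_le_of_adjoin_eq b hvQspan hLfg hLD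
  rw [Fintype.card_fin] at hbound
  set p := (n + 1) * n
  refine ⟨(p + 1 : ℕ), 1 / C, by simp, by positivity, fun S hS R M ε hR hM hε hlt hadj => ?_⟩
  rw [lt_div_iff₀' hC, Real.rpow_natCast, Real.rpow_natCast] at hlt
  have hone : 1 ≤ C * (ε * R ^ p * M ^ p) := by
    refine hbound S hS _ R M ε hR hM hε.le ?_ hadj
    rintro x ⟨hxD, hxR, hxS, hxM⟩
    exact ⟨hxR, hxS, (hasDenomLE_latDenom (hLspan ▸ hxD)).mono hxM⟩
  refine hlt.not_ge (hone.trans ?_)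
  gcongr <;> first | assumption | exact p.le_succ
end

section
/- (Core of Lemma 4.3 over ℂ) Let n ≥ 1 and let S be a set of n×n complex matrices. Suppose that for every subset T ⊆ S with at most n+1 elements there exists an invertible n×n complex matrix P such that P⁻¹·t·P is diagonal for every t ∈ T. Then there exists a single invertible n×n complex matrix P such that P⁻¹·s·P is diagonal for every s ∈ S. -/
/-!
The matrices diagonalized by a fixed invertible `P` form a linear subspace, isomorphic to the space
of diagonal matrices and hence of rank the size `n` of the matrices. So it suffices to consider
linear spans. If every subset of `S` of at most `n + 1` elements lies in a subspace of rank at most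
`n`, then no `n + 1` elements of `S` are linearly independent, so at most `n` of them span `S`; a
subspace containing these contains `S`.
-/

section LinearSpan

variable {K V : Type*} [DivisionRing K] [AddCommGroup V] [Module K V] {S : Set V} {n : ℕ}

lemma exists_finset_card_le_subset_span
    (hS : ∀ T : Finset V, ↑T ⊆ S → LinearIndepOn K id (T : Set V) → T.card ≠ n + 1) :
    ∃ T : Finset V, ↑T ⊆ S ∧ T.card ≤ n ∧ S ⊆ Submodule.span K (T : Set V) := by
  obtain ⟨b, hbS, hspan, hb⟩ := exists_linearIndependent K S
  have hcard : b.encard ≤ n := by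
    by_contra! hlt
    obtain ⟨T, hTb, hT⟩ := Set.exists_subset_encard_eq (Order.add_one_le_of_lt hlt)
    lift T to Finset V using Set.finite_of_encard_eq_coe hT
    rw [Set.encard_coe_eq_coe_finsetCard] at hT
    exact hS T (hTb.trans hbS) (LinearIndepOn.mono hb hTb) (by exact_mod_cast hT)
  lift b to Finset V using Set.finite_of_encard_le_coe hcard
  rw [Set.encard_coe_eq_coe_finsetCard] at hcard
  exact ⟨b, hbS, by exact_mod_cast hcard, hspan ▸ Submodule.subset_span⟩

lemma exists_subset_submodule_of_small_subsets {ι : Type*} {W : ι → Submodule K V}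
    (hW : ∀ i, Module.rank K (W i) ≤ n)
    (hS : ∀ T : Finset V, ↑T ⊆ S → T.card ≤ n + 1 → ∃ i, (T : Set V) ⊆ W i) :
    ∃ i, S ⊆ W i := by
  have not_linearIndepOn (T : Finset V) (hTS : ↑T ⊆ S) (hT : LinearIndepOn K id (T : Set V)) :
      T.card ≠ n + 1 := by
    intro hcard
    obtain ⟨i, hi⟩ := hS T hTS hcard.le
    have hle : (T.card : Cardinal) ≤ n :=
      calc (T.card : Cardinal) = Module.rank K (Submodule.span K (T : Set V)) := by
            rw [rank_span_set hT, Finset.coe_sort_coe, Cardinal.mk_coe_finset]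
        _ ≤ Module.rank K (W i) := Submodule.rank_mono (Submodule.span_le.2 hi)
        _ ≤ n := hW i
    have : T.card ≤ n := by exact_mod_cast hle
    omega
  obtain ⟨T, hTS, hcard, hspan⟩ := exists_finset_card_le_subset_span not_linearIndepOn
  obtain ⟨i, hi⟩ := hS T hTS (hcard.trans n.le_succ)
  exact ⟨i, hspan.trans (Submodule.span_le.2 hi)⟩

end LinearSpan

section Diagonalized

variable {m R : Type*} [Fintype m] [DecidableEq m] [CommRing R]

/-- The submodule of the matrices that conjugation by `P` makes diagonal. It is meant for
invertible `P`; otherwise `P⁻¹ = 0` and it contains every matrix. -/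
def diagonalizedBy (P : Matrix m m R) : Submodule R (Matrix m m R) where
  carrier := {A | (P⁻¹ * A * P).IsDiag}
  zero_mem' := by simp [Matrix.isDiag_zero]
  add_mem' {A B} hA hB := by
    simpa only [Set.mem_ofPred_eq, Matrix.mul_add, Matrix.add_mul] using hA.add hB
  smul_mem' c A hA := by
    simpa only [Set.mem_ofPred_eq, Matrix.mul_smul, Matrix.smul_mul] using hA.smul c

lemma diagonalizedBy_le_range {P : Matrix m m R} (hP : IsUnit P.det) :
    diagonalizedBy P ≤ LinearMap.range
      (LinearMap.mulLeftRight R (P, P⁻¹) ∘ₗ Matrix.diagonalLinearMap m R R) := by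
  intro A hA
  refine ⟨(P⁻¹ * A * P).diag, ?_⟩
  calc P * Matrix.diagonal (P⁻¹ * A * P).diag * P⁻¹ = P * (P⁻¹ * A * P) * P⁻¹ := by
        rw [Matrix.IsDiag.diagonal_diag hA]
    _ = A := by
        rw [Matrix.mul_assoc P⁻¹, Matrix.mul_nonsing_inv_cancel_left _ _ hP,
          Matrix.mul_nonsing_inv_cancel_right _ _ hP]

lemma rank_diagonalizedBy_le [Nontrivial R] {P : Matrix m m R} (hP : IsUnit P.det) :
    Module.rank R (diagonalizedBy P) ≤ Fintype.card m :=
  calc Module.rank R (diagonalizedBy P)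
      ≤ Module.rank R (LinearMap.range
          (LinearMap.mulLeftRight R (P, P⁻¹) ∘ₗ Matrix.diagonalLinearMap m R R)) :=
        Submodule.rank_mono (diagonalizedBy_le_range hP)
    _ ≤ Module.rank R (m → R) := rank_range_le _
    _ = Fintype.card m := rank_fun'

end Diagonalized

theorem simultaneously_diagonalizable_of_small_subsets_general {m K : Type*} [Fintype m]
    [DecidableEq m] [Field K] (S : Set (Matrix m m K))
    (hsmall : ∀ T : Finset (Matrix m m K), ↑T ⊆ S → T.card ≤ Fintype.card m + 1 →
      ∃ P : Matrix m m K, IsUnit P.det ∧ ∀ t ∈ T, (P⁻¹ * t * P).IsDiag) :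
    ∃ P : Matrix m m K, IsUnit P.det ∧ ∀ s ∈ S, (P⁻¹ * s * P).IsDiag := by
  let W (P : {P : Matrix m m K // IsUnit P.det}) : Submodule K (Matrix m m K) := diagonalizedBy P.1
  have small_subset (T : Finset (Matrix m m K)) (hTS : ↑T ⊆ S)
      (hcard : T.card ≤ Fintype.card m + 1) : ∃ P, (T : Set (Matrix m m K)) ⊆ W P := by
    obtain ⟨P, hP, hT⟩ := hsmall T hTS hcard
    exact ⟨⟨P, hP⟩, hT⟩
  obtain ⟨⟨P, hP⟩, hS⟩ := exists_subset_submodule_of_small_subsets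
    (fun P => rank_diagonalizedBy_le P.2) small_subset
  exact ⟨P, hP, hS⟩

/-- **core of Lemma 4.3 over ℂ.**  Let `S` be a set of `n × n` complex
matrices such that every subset `T ⊆ S` with at most `n + 1` elements is simultaneously
diagonalizable.  Then `S` itself is simultaneously diagonalizable. -/
theorem simultaneously_diagonalizable_of_small_subsets
    {n : ℕ} (hn : 1 ≤ n) (S : Set (Matrix (Fin n) (Fin n) ℂ))
    (hsmall : ∀ T : Finset (Matrix (Fin n) (Fin n) ℂ), ↑T ⊆ S → T.card ≤ n + 1 →
      ∃ P : Matrix (Fin n) (Fin n) ℂ, IsUnit P.det ∧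
        ∀ t ∈ T, (P⁻¹ * t * P).IsDiag) :
    ∃ P : Matrix (Fin n) (Fin n) ℂ, IsUnit P.det ∧
      ∀ s ∈ S, (P⁻¹ * s * P).IsDiag :=
  simultaneously_diagonalizable_of_small_subsets_general S (by simpa only [Fintype.card_fin])
end
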